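/- Let s > 2 and let γ : [0,L] → ℝ² (L > 0) be a C² unit-speed curve (‖γ'(t)‖ = 1 for all t) with nowhere-vanishing curvature (γ''(t) ≠ 0 for all t), and let σ be the normalized arc-length measure on its image Γ, i.e. the pushforward by γ of normalized Lebesgue measure on [0,L]. Then there exists N(s,γ) ∈ ℕ such that for every N ≥ N(s,γ) and every finitely supported family (c_k)_{|k|≥N} of complex numbers, (1/2) ∑_{|k|≥N} |c_k|² ≤ ∫_Γ |∑_{|k|≥N} c_k e^{2πi(|k|^s x + k y)}|² dσ(x,y) ≤ (3/2) ∑_{|k|≥N} |c_k|². -/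

import Mathlib

open MeasureTheory Set

lemma vdc_w (L : ℝ) (hL : 0 < L) (p1 p2 κ : ℝ → ℝ)
    (c1 : ContinuousOn p1 (Icc 0 L)) (c2 : ContinuousOn p2 (Icc 0 L)) (ck : ContinuousOn κ (Icc 0 L))
    (d1 : ∀ t ∈ Ioo 0 L, HasDerivAt p1 (-(κ t * p2 t)) t)
    (d2 : ∀ t ∈ Ioo 0 L, HasDerivAt p2 (κ t * p1 t) t)
    (hsp : ∀ t ∈ Icc 0 L, p1 t ^ 2 + p2 t ^ 2 = 1)
    (σ κ0 K : ℝ) (hσ : |σ| = 1) (hκ0 : 0 < κ0)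
    (hlow : ∀ t ∈ Icc 0 L, κ0 ≤ σ * κ t) (hup : ∀ t ∈ Icc 0 L, σ * κ t ≤ K)
    (a b r : ℝ) (hr : 1 ≤ r) (hab : a ^ 2 + b ^ 2 = r ^ 4) :
    ∫ t in (0:ℝ)..L, r ^ 2 / ((a * p1 t + b * p2 t) ^ 2 + r ^ 2) ≤ ((4 + 3 * K * L) / κ0) / r := by
  set u : ℝ → ℝ := fun t => a * p1 t + b * p2 t with hu
  set v : ℝ → ℝ := fun t => b * p1 t - a * p2 t with hv
  have r0 : 0 < r := by linarith
  have cu : ContinuousOn u (Icc 0 L) := by fun_prop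
  have cv : ContinuousOn v (Icc 0 L) := by fun_prop
  have huv : ∀ t ∈ Icc 0 L, u t ^ 2 + v t ^ 2 = r ^ 4 := by
    intro t ht
    have := hsp t ht
    simp only [hu, hv]
    rw [← hab]; linear_combination (a^2+b^2) * this
  have du : ∀ t ∈ Ioo 0 L, HasDerivAt u (κ t * v t) t := by
    intro t ht
    refine (((d1 t ht).const_mul a).add ((d2 t ht).const_mul b)).congr_deriv ?_
    simp only [hv]; ring
  have dv : ∀ t ∈ Ioo 0 L, HasDerivAt v (-(κ t * u t)) t := by
    intro t ht
    refine (((d1 t ht).const_mul b).sub ((d2 t ht).const_mul a)).congr_deriv ?_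
    simp only [hu]; ring
  have hden : ∀ t, 0 < u t ^ 2 + r ^ 2 := fun t => by positivity
  have hden' : ∀ t, u t ^ 2 + r ^ 2 ≠ 0 := fun t => (hden t).ne'
  set F : ℝ → ℝ := fun t => v t * Real.arctan (u t / r) with hF
  set F' : ℝ → ℝ := fun t => κ t * v t ^ 2 * (r / (u t ^ 2 + r ^ 2)) - κ t * u t * Real.arctan (u t / r) with hF'
  have dF : ∀ t ∈ Ioo 0 L, HasDerivAt F (F' t) t := by
    intro t ht
    refine ((dv t ht).mul (((du t ht).div_const r).arctan)).congr_deriv ?_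
    simp only [hF']
    have := hden' t
    have h2 : 1 + (u t / r) ^ 2 ≠ 0 := by positivity
    field_simp
    ring
  have cat : ContinuousOn (fun t => Real.arctan (u t / r)) (Icc 0 L) :=
    Real.continuous_arctan.comp_continuousOn (cu.div_const r)
  have cF : ContinuousOn F (Icc 0 L) := cv.mul cat
  have cF' : ContinuousOn F' (Icc 0 L) := by
    refine ((ck.mul (cv.pow 2)).mul (continuousOn_const.div ((cu.pow 2).add continuousOn_const) fun t _ => hden' t)).sub ((ck.mul cu).mul cat)
  have iF' : IntervalIntegrable F' volume 0 L :=
    ContinuousOn.intervalIntegrable (by rwa [uIcc_of_le hL.le])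
  have ftc := intervalIntegral.integral_eq_sub_of_hasDerivAt_of_le hL.le cF dF iF'
  have cw : ContinuousOn (fun t => r ^ 2 / (u t ^ 2 + r ^ 2)) (Icc 0 L) :=
    continuousOn_const.div ((cu.pow 2).add continuousOn_const) fun t _ => hden' t
  have iw : IntervalIntegrable (fun t => r ^ 2 / (u t ^ 2 + r ^ 2)) volume 0 L :=
    ContinuousOn.intervalIntegrable (by rwa [uIcc_of_le hL.le])
  have hat : ∀ x, |Real.arctan x| ≤ 2 := by
    intro x
    have h1 := Real.arctan_lt_pi_div_two x
    have h2 := Real.neg_pi_div_two_lt_arctan x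
    have := Real.pi_lt_four
    rw [abs_le]; constructor <;> linarith
  have hub : ∀ t ∈ Icc 0 L, |u t| ≤ r ^ 2 := by
    intro t ht
    apply abs_le_of_sq_le_sq _ (by positivity)
    nlinarith [huv t ht, sq_nonneg (v t)]
  have hvb : ∀ t ∈ Icc 0 L, |v t| ≤ r ^ 2 := by
    intro t ht
    apply abs_le_of_sq_le_sq _ (by positivity)
    nlinarith [huv t ht, sq_nonneg (u t)]
  have hFb : ∀ t ∈ Icc 0 L, |F t| ≤ 2 * r ^ 2 := by
    intro t ht
    simp only [hF, abs_mul]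
    nlinarith [hvb t ht, hat (u t / r), abs_nonneg (v t), abs_nonneg (Real.arctan (u t / r)), sq_nonneg r]
  have key : ∀ t ∈ Icc 0 L, κ0 * r ^ 3 * (r ^ 2 / (u t ^ 2 + r ^ 2)) ≤ σ * F' t + 3 * K * r ^ 2 := by
    intro t ht
    have hk := hlow t ht
    have hk2 := hup t ht
    have hkp : 0 ≤ σ * κ t := by linarith
    have hw : 0 ≤ r ^ 2 / (u t ^ 2 + r ^ 2) := by positivity
    have e1 : σ * F' t = σ * κ t * r ^ 3 * (r ^ 2 / (u t ^ 2 + r ^ 2)) - σ * κ t * (u t ^ 2 / (u t ^ 2 + r ^ 2) * r)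
        - σ * κ t * (u t * Real.arctan (u t / r)) := by
      have hvv : v t ^ 2 = r ^ 4 - u t ^ 2 := by linarith [huv t ht]
      simp only [hF', hvv]
      have := hden' t
      field_simp
    have e2 : κ0 * r ^ 3 * (r ^ 2 / (u t ^ 2 + r ^ 2)) ≤ σ * κ t * r ^ 3 * (r ^ 2 / (u t ^ 2 + r ^ 2)) := by
      gcongr
    have e3 : u t ^ 2 / (u t ^ 2 + r ^ 2) * r ≤ r ^ 2 := by
      have : u t ^ 2 / (u t ^ 2 + r ^ 2) ≤ 1 := by
        rw [div_le_one (hden t)]; nlinarith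
      nlinarith
    have e4 : u t * Real.arctan (u t / r) ≤ 2 * r ^ 2 := by
      refine (le_abs_self _).trans ?_
      rw [abs_mul]
      nlinarith [hub t ht, hat (u t / r), abs_nonneg (u t), abs_nonneg (Real.arctan (u t / r)), sq_nonneg r]
    have e5 : σ * κ t * (u t ^ 2 / (u t ^ 2 + r ^ 2) * r + u t * Real.arctan (u t / r)) ≤ K * (3 * r ^ 2) := by
      calc _ ≤ σ * κ t * (3 * r ^ 2) := by gcongr; linarith
        _ ≤ _ := by gcongr
    linarith
  have hint : ∫ t in (0:ℝ)..L, κ0 * r ^ 3 * (r ^ 2 / (u t ^ 2 + r ^ 2)) ≤ ∫ t in (0:ℝ)..L, (σ * F' t + 3 * K * r ^ 2) :=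
    intervalIntegral.integral_mono_on hL.le (iw.const_mul _) ((iF'.const_mul _).add intervalIntegrable_const) key
  rw [intervalIntegral.integral_const_mul, intervalIntegral.integral_add (iF'.const_mul _) intervalIntegrable_const,
    intervalIntegral.integral_const_mul, ftc, intervalIntegral.integral_const, smul_eq_mul] at hint
  have hs : σ * (F L - F 0) ≤ 4 * r ^ 2 := by
    refine (le_abs_self _).trans ?_
    rw [abs_mul, hσ, one_mul]
    have h1 := abs_le.1 (hFb L ⟨hL.le, le_rfl⟩)
    have h2 := abs_le.1 (hFb 0 ⟨le_rfl, hL.le⟩)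
    rw [abs_le]; constructor <;> linarith [h1.1, h1.2, h2.1, h2.2]
  change ∫ t in (0:ℝ)..L, r ^ 2 / (u t ^ 2 + r ^ 2) ≤ _
  set J := ∫ t in (0:ℝ)..L, r ^ 2 / (u t ^ 2 + r ^ 2)
  rw [div_div, le_div_iff₀ (by positivity)]
  have : (J * (κ0 * r)) * r ^ 2 ≤ (4 + 3 * K * L) * r ^ 2 := by nlinarith
  exact le_of_mul_le_mul_right this (by positivity)

lemma vdc (L : ℝ) (hL : 0 < L) (g1 g2 p1 p2 κ : ℝ → ℝ)
    (cg1 : ContinuousOn g1 (Icc 0 L)) (cg2 : ContinuousOn g2 (Icc 0 L))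
    (c1 : ContinuousOn p1 (Icc 0 L)) (c2 : ContinuousOn p2 (Icc 0 L)) (ck : ContinuousOn κ (Icc 0 L))
    (dg1 : ∀ t ∈ Ioo 0 L, HasDerivAt g1 (p1 t) t)
    (dg2 : ∀ t ∈ Ioo 0 L, HasDerivAt g2 (p2 t) t)
    (d1 : ∀ t ∈ Ioo 0 L, HasDerivAt p1 (-(κ t * p2 t)) t)
    (d2 : ∀ t ∈ Ioo 0 L, HasDerivAt p2 (κ t * p1 t) t)
    (hsp : ∀ t ∈ Icc 0 L, p1 t ^ 2 + p2 t ^ 2 = 1)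
    (σ κ0 K : ℝ) (hσ : |σ| = 1) (hκ0 : 0 < κ0)
    (hlow : ∀ t ∈ Icc 0 L, κ0 ≤ σ * κ t) (hup : ∀ t ∈ Icc 0 L, σ * κ t ≤ K)
    (a b r : ℝ) (hr : 1 ≤ r) (hab : a ^ 2 + b ^ 2 = r ^ 4) :
    ‖∫ t in (0:ℝ)..L, Complex.exp (((a * g1 t + b * g2 t : ℝ) : ℂ) * Complex.I)‖ ≤
      (1 + (1 + K) * ((4 + 3 * K * L) / κ0)) / r := by
  have hW := vdc_w L hL p1 p2 κ c1 c2 ck d1 d2 hsp σ κ0 K hσ hκ0 hlow hup a b r hr hab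
  set u : ℝ → ℝ := fun t => a * p1 t + b * p2 t with hu
  set v : ℝ → ℝ := fun t => b * p1 t - a * p2 t with hv
  set P : ℝ → ℝ := fun t => a * g1 t + b * g2 t with hP
  have r0 : 0 < r := by linarith
  have cP : ContinuousOn P (Icc 0 L) := by fun_prop
  have cu : ContinuousOn u (Icc 0 L) := by fun_prop
  have cv : ContinuousOn v (Icc 0 L) := by fun_prop
  have huv : ∀ t ∈ Icc 0 L, u t ^ 2 + v t ^ 2 = r ^ 4 := by
    intro t ht
    have := hsp t ht
    simp only [hu, hv]
    rw [← hab]; linear_combination (a^2+b^2) * this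
  have dP : ∀ t ∈ Ioo 0 L, HasDerivAt P (u t) t := by
    intro t ht
    exact (((dg1 t ht).const_mul a).add ((dg2 t ht).const_mul b))
  have du : ∀ t ∈ Ioo 0 L, HasDerivAt u (κ t * v t) t := by
    intro t ht
    refine (((d1 t ht).const_mul a).add ((d2 t ht).const_mul b)).congr_deriv ?_
    simp only [hv]; ring
  have hden : ∀ t, 0 < u t ^ 2 + r ^ 2 := fun t => by positivity
  have hden' : ∀ t, u t ^ 2 + r ^ 2 ≠ 0 := fun t => (hden t).ne'
  have hvb : ∀ t ∈ Icc 0 L, |v t| ≤ r ^ 2 := by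
    intro t ht
    apply abs_le_of_sq_le_sq _ (by positivity)
    nlinarith [huv t ht, sq_nonneg (u t)]
  set w : ℝ → ℝ := fun t => r ^ 2 / (u t ^ 2 + r ^ 2) with hw
  set g : ℝ → ℝ := fun t => u t / (u t ^ 2 + r ^ 2) with hg
  set g' : ℝ → ℝ := fun t => κ t * v t * (r ^ 2 - u t ^ 2) / (u t ^ 2 + r ^ 2) ^ 2 with hg'
  set E : ℝ → ℂ := fun t => Complex.exp ((P t : ℂ) * Complex.I) with hE
  have cE : ContinuousOn E (Icc 0 L) :=
    Complex.continuous_exp.comp_continuousOn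
      ((Complex.continuous_ofReal.comp_continuousOn cP).mul continuousOn_const)
  have nE : ∀ t, ‖E t‖ = 1 := fun t => Complex.norm_exp_ofReal_mul_I _
  have dE : ∀ t ∈ Ioo 0 L, HasDerivAt E (E t * (u t * Complex.I)) t := by
    intro t ht
    exact (((dP t ht).ofReal_comp).mul_const Complex.I).cexp
  have cg : ContinuousOn g (Icc 0 L) := cu.div ((cu.pow 2).add continuousOn_const) fun t _ => hden' t
  have cg' : ContinuousOn g' (Icc 0 L) := by
    refine ((ck.mul cv).mul (continuousOn_const.sub (cu.pow 2))).div
      (((cu.pow 2).add continuousOn_const).pow 2) fun t _ => pow_ne_zero _ (hden' t)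
  have cw : ContinuousOn w (Icc 0 L) :=
    continuousOn_const.div ((cu.pow 2).add continuousOn_const) fun t _ => hden' t
  have dg : ∀ t ∈ Ioo 0 L, HasDerivAt g (g' t) t := by
    intro t ht
    refine ((du t ht).div (((du t ht).pow 2).add_const (r ^ 2)) (hden' t)).congr_deriv ?_
    simp only [hg']
    congr 1
    simp only [Pi.pow_apply]
    push_cast
    ring
  set G : ℝ → ℂ := fun t => -Complex.I * (E t * (g t : ℂ)) with hG
  set H : ℝ → ℂ := fun t => E t * ((w t : ℂ) + Complex.I * (g' t : ℂ)) with hH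
  have cG : ContinuousOn G (Icc 0 L) :=
    continuousOn_const.mul (cE.mul (Complex.continuous_ofReal.comp_continuousOn cg))
  have cH : ContinuousOn H (Icc 0 L) :=
    cE.mul ((Complex.continuous_ofReal.comp_continuousOn cw).add
      (continuousOn_const.mul (Complex.continuous_ofReal.comp_continuousOn cg')))
  have dG : ∀ t ∈ Ioo 0 L, HasDerivAt G (E t - H t) t := by
    intro t ht
    refine (((dE t ht).mul ((dg t ht).ofReal_comp)).const_mul (-Complex.I)).congr_deriv ?_
    have hug : (u t : ℂ) * (g t : ℂ) = 1 - (w t : ℂ) := by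
      have : u t * g t = 1 - w t := by
        simp only [hg, hw]
        have := hden' t
        field_simp
        ring
      exact_mod_cast this
    simp only [hH]
    linear_combination (E t) * hug - (E t * u t * g t) * Complex.I_sq
  have iE : IntervalIntegrable E volume 0 L :=
    ContinuousOn.intervalIntegrable (by rwa [uIcc_of_le hL.le])
  have iH : IntervalIntegrable H volume 0 L :=
    ContinuousOn.intervalIntegrable (by rwa [uIcc_of_le hL.le])
  have iw : IntervalIntegrable w volume 0 L :=
    ContinuousOn.intervalIntegrable (by rwa [uIcc_of_le hL.le])
  have ftc := intervalIntegral.integral_eq_sub_of_hasDerivAt_of_le hL.le cG dG (iE.sub iH)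
  rw [intervalIntegral.integral_sub iE iH] at ftc
  have hgb : ∀ t, ‖G t‖ ≤ 1 / (2 * r) := by
    intro t
    simp only [hG, norm_mul, norm_neg, Complex.norm_I, nE, one_mul, Complex.norm_real, Real.norm_eq_abs, hg, abs_div,
      abs_of_pos (hden t)]
    rw [div_le_div_iff₀ (hden t) (by positivity)]
    nlinarith [sq_nonneg (|u t| - r), sq_abs (u t)]
  have hHb : ‖∫ t in (0:ℝ)..L, H t‖ ≤ ∫ t in (0:ℝ)..L, (1 + K) * w t := by
    refine intervalIntegral.norm_integral_le_of_norm_le hL.le ?_ (iw.const_mul _)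
    filter_upwards with t ht
    have ht' : t ∈ Icc 0 L := ⟨ht.1.le, ht.2⟩
    have hw0 : 0 ≤ w t := by simp only [hw]; positivity
    simp only [hH, norm_mul, nE, one_mul]
    refine (norm_add_le _ _).trans ?_
    rw [norm_mul, Complex.norm_I, one_mul, Complex.norm_real, Complex.norm_real, Real.norm_eq_abs, Real.norm_eq_abs,
      abs_of_nonneg hw0]
    have hκ : |κ t| ≤ K := by
      have : |κ t| = |σ * κ t| := by rw [abs_mul, hσ, one_mul]
      rw [this, abs_of_nonneg (by linarith [hlow t ht'])]
      exact hup t ht'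
    have : |g' t| ≤ K * w t := by
      simp only [hg', hw, abs_div, abs_mul, abs_pow, abs_of_pos (hden t)]
      have h1 : |r ^ 2 - u t ^ 2| ≤ u t ^ 2 + r ^ 2 := by
        rw [abs_le]; constructor <;> nlinarith [sq_nonneg r, sq_nonneg (u t)]
      have hK : 0 ≤ K := (abs_nonneg _).trans hκ
      calc |κ t| * |v t| * |r ^ 2 - u t ^ 2| / (u t ^ 2 + r ^ 2) ^ 2
          ≤ K * r ^ 2 * (u t ^ 2 + r ^ 2) / (u t ^ 2 + r ^ 2) ^ 2 := by
            gcongr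
            exact hvb t ht'
        _ = _ := by
            have := hden' t
            field_simp
    linarith
  rw [intervalIntegral.integral_const_mul] at hHb
  have hK1 : 0 ≤ 1 + K := by
    have := hlow 0 ⟨le_rfl, hL.le⟩
    have := hup 0 ⟨le_rfl, hL.le⟩
    linarith
  have e : ∫ t in (0:ℝ)..L, E t = (G L - G 0) + ∫ t in (0:ℝ)..L, H t := by
    rw [← ftc]; ring
  change ‖∫ t in (0:ℝ)..L, E t‖ ≤ _
  rw [e]
  calc _ ≤ ‖G L - G 0‖ + ‖∫ t in (0:ℝ)..L, H t‖ := norm_add_le _ _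
    _ ≤ (1 / (2 * r) + 1 / (2 * r)) + (1 + K) * (((4 + 3 * K * L) / κ0) / r) := by
        gcongr
        · exact (norm_sub_le _ _).trans (add_le_add (hgb _) (hgb _))
        · exact hHb.trans (mul_le_mul_of_nonneg_left hW hK1)
    _ = _ := by field_simp; ring

lemma rlow_aux (s : ℝ) (hs : 2 < s) (x y : ℝ) (hy : 0 < y) (hxy : y < x) :
    x ^ (s - 1) * (x - y) ≤ x ^ s - y ^ s := by
  have hx : 0 < x := by linarith
  have h1 : x ^ s = x ^ (s - 1) * x := by
    rw [← Real.rpow_add_one hx.ne']; congr 1; ring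
  have h2 : y ^ s = y ^ (s - 1) * y := by
    rw [← Real.rpow_add_one hy.ne']; congr 1; ring
  have h3 : y ^ (s - 1) ≤ x ^ (s - 1) := Real.rpow_le_rpow hy.le hxy.le (by linarith)
  rw [h1, h2]
  nlinarith [mul_le_mul_of_nonneg_right h3 hy.le]

/-- the decay bound for one pair, y < x -/
lemma rlow_aux2 (s : ℝ) (hs : 2 < s) (N x y : ℝ) (hN : 1 ≤ N) (hy : N ≤ y) (hxy : y < x) :
    (x ^ s - y ^ s) ^ (-(1/2) : ℝ) ≤ N ^ (-((s-2)/4)) * (x - y) ^ (-(1 + (s-2)/4)) := by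
  have hx : 0 < x := by linarith
  have hd : 0 < x - y := by linarith
  calc (x ^ s - y ^ s) ^ (-(1/2) : ℝ) ≤ (x ^ (s - 1) * (x - y)) ^ (-(1/2) : ℝ) :=
        Real.rpow_le_rpow_of_nonpos (by positivity) (rlow_aux s hs x y (by linarith) hxy) (by norm_num)
    _ = x ^ (-((s-2)/4)) * x ^ (-(1/2 + (s-2)/4)) * (x - y) ^ (-(1/2) : ℝ) := by
        rw [Real.mul_rpow (by positivity) hd.le, ← Real.rpow_mul hx.le, ← Real.rpow_add hx]
        congr 2; ring
    _ ≤ N ^ (-((s-2)/4)) * (x - y) ^ (-(1/2 + (s-2)/4)) * (x - y) ^ (-(1/2) : ℝ) := by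
        gcongr ?_ * ?_ * _
        · exact Real.rpow_le_rpow_of_nonpos (by linarith) (by linarith) (by linarith)
        · exact Real.rpow_le_rpow_of_nonpos hd (by linarith) (by linarith)
    _ = _ := by
        rw [mul_assoc, ← Real.rpow_add hd]; congr 2; ring

lemma rlow (s : ℝ) (hs : 2 < s) (N : ℝ) (hN : 1 ≤ N) (k l : ℤ) (hk : N ≤ |(k:ℝ)|) (hl : N ≤ |(l:ℝ)|)
    (hkl : k ≠ l) (R : ℝ) (hR1 : |(|(k:ℝ)| ^ s - |(l:ℝ)| ^ s)| ≤ R) (hR2 : |(k:ℝ) - l| ≤ R) :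
    R ^ (-(1/2) : ℝ) ≤ N ^ (-((s-2)/4)) * (|((k - l : ℤ) : ℝ)| ^ (-(1 + (s-2)/4)) + |((k + l : ℤ):ℝ)| ^ (-(1 + (s-2)/4)))
      + (if l = -k then N ^ (-(1/2) : ℝ) else 0) := by
  have hN0 : 0 < N := by linarith
  split_ifs with h
  · have : N ≤ R := by
      refine le_trans ?_ hR2
      rw [h]; push_cast
      rw [sub_neg_eq_add, ← two_mul, abs_mul, abs_two]
      linarith
    have h1 : R ^ (-(1/2) : ℝ) ≤ N ^ (-(1/2) : ℝ) := Real.rpow_le_rpow_of_nonpos hN0 this (by norm_num)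
    have h2 : 0 ≤ N ^ (-((s-2)/4)) * (|((k - l : ℤ) : ℝ)| ^ (-(1 + (s-2)/4)) + |((k + l : ℤ):ℝ)| ^ (-(1 + (s-2)/4))) := by positivity
    linarith
  · rw [add_zero]
    have hne : |(k:ℝ)| ≠ |(l:ℝ)| := by
      intro e
      rcases abs_eq_abs.1 e with e | e
      · exact hkl (by exact_mod_cast e)
      · apply h
        have : k = -l := by exact_mod_cast e
        omega
    have key : R ^ (-(1/2) : ℝ) ≤ N ^ (-((s-2)/4)) * |(|(k:ℝ)| - |(l:ℝ)|)| ^ (-(1 + (s-2)/4)) := by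
      rcases lt_or_gt_of_ne hne with hlt | hlt
      · have h3 := Real.rpow_lt_rpow (by positivity) hlt (by linarith : 0 < s)
        rw [abs_sub_comm, abs_of_pos (by linarith)] at hR1
        rw [abs_sub_comm, abs_of_pos (by linarith)]
        exact (Real.rpow_le_rpow_of_nonpos (by linarith) hR1 (by norm_num)).trans (rlow_aux2 s hs N _ _ hN hk hlt)
      · have h3 := Real.rpow_lt_rpow (by positivity) hlt (by linarith : 0 < s)
        rw [abs_of_pos (by linarith)] at hR1
        rw [abs_of_pos (by linarith)]
        exact (Real.rpow_le_rpow_of_nonpos (by linarith) hR1 (by norm_num)).trans (rlow_aux2 s hs N _ _ hN hl hlt)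
    refine key.trans ?_
    gcongr
    have hcase : |(|(k:ℝ)| - |(l:ℝ)|)| = |((k - l : ℤ) : ℝ)| ∨ |(|(k:ℝ)| - |(l:ℝ)|)| = |((k + l : ℤ) : ℝ)| := by
      push_cast
      rcases abs_cases (k:ℝ) with ⟨e1, _⟩ | ⟨e1, _⟩ <;> rcases abs_cases (l:ℝ) with ⟨e2, _⟩ | ⟨e2, _⟩ <;> rw [e1, e2]
      · left; rfl
      · right; congr 1; ring
      · right; rw [← abs_neg]; congr 1; ring
      · left; rw [← abs_neg]; congr 1; ring
    have p1 : 0 ≤ |((k - l : ℤ) : ℝ)| ^ (-(1 + (s-2)/4)) := by positivity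
    have p2 : 0 ≤ |((k + l : ℤ) : ℝ)| ^ (-(1 + (s-2)/4)) := by positivity
    rcases hcase with e | e <;> rw [e] <;> linarith

lemma rowsum (s : ℝ) (hs : 2 < s) (N : ℝ) (hN : 1 ≤ N) (S : Finset ℤ) (k : ℤ) :
    ∑ l ∈ S, (N ^ (-((s-2)/4)) * (|((k - l : ℤ) : ℝ)| ^ (-(1 + (s-2)/4)) + |((k + l : ℤ):ℝ)| ^ (-(1 + (s-2)/4)))
      + (if l = -k then N ^ (-(1/2) : ℝ) else 0)) ≤
    N ^ (-((s-2)/4)) * (2 * ∑' j : ℤ, |(j:ℝ)| ^ (-(1 + (s-2)/4))) + N ^ (-(1/2) : ℝ) := by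
  have hsum : Summable (fun j : ℤ => |(j:ℝ)| ^ (-(1 + (s-2)/4))) :=
    Real.summable_abs_int_rpow (by linarith)
  rw [Finset.sum_add_distrib, ← Finset.mul_sum, Finset.sum_add_distrib]
  have h0 : 0 ≤ N ^ (-(1/2) : ℝ) := by positivity
  gcongr ?_ * ?_ + ?_
  · rw [two_mul]
    gcongr ?_ + ?_
    · rw [← Finset.sum_image (f := fun j : ℤ => |(j:ℝ)| ^ (-(1 + (s-2)/4))) (g := fun l => k - l) (by intro a _ b _ h; simpa using h)]
      exact hsum.sum_le_tsum _ fun i _ => by positivity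
    · rw [← Finset.sum_image (f := fun j : ℤ => |(j:ℝ)| ^ (-(1 + (s-2)/4))) (g := fun l => k + l) (by intro a _ b _ h; simpa using h)]
      exact hsum.sum_le_tsum _ fun i _ => by positivity
  · rw [Finset.sum_ite_eq']
    split_ifs
    · exact le_rfl
    · exact h0

lemma ex_N (s : ℝ) (hs : 2 < s) (ε Z : ℝ) (hε : 0 < ε) :
    ∃ N₀ : ℕ, 1 ≤ N₀ ∧ ∀ N : ℕ, N₀ ≤ N →
      (N:ℝ) ^ (-((s-2)/4)) * Z + (N:ℝ) ^ (-(1/2) : ℝ) ≤ ε := by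
  have h1 := (tendsto_rpow_neg_atTop (y := (s-2)/4) (by linarith)).comp (tendsto_natCast_atTop_atTop (R := ℝ))
  have h2 := (tendsto_rpow_neg_atTop (y := 1/2) (by norm_num)).comp (tendsto_natCast_atTop_atTop (R := ℝ))
  have h3 := (h1.mul_const Z).add h2
  rw [zero_mul, zero_add] at h3
  obtain ⟨n, hn⟩ := Filter.eventually_atTop.1 (h3.eventually (gt_mem_nhds hε))
  refine ⟨max n 1, le_max_right _ _, fun N hN => ?_⟩
  exact (hn N (le_trans (le_max_left _ _) hN)).le

lemma schur (S : Finset ℤ) (c : ℤ → ℝ) (B : ℤ → ℤ → ℝ) (hB : ∀ k l, B k l = B l k) (hB0 : ∀ k l, 0 ≤ B k l) (ε : ℝ)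
    (hrow : ∀ k, ∑ l ∈ S, B k l ≤ ε) :
    ∑ k ∈ S, ∑ l ∈ S, c k * c l * B k l ≤ ε * ∑ k ∈ S, c k ^ 2 := by
  have h1 : ∑ k ∈ S, ∑ l ∈ S, c k ^ 2 * B k l ≤ ε * ∑ k ∈ S, c k ^ 2 := by
    rw [Finset.mul_sum]
    refine Finset.sum_le_sum fun k _ => ?_
    rw [← Finset.mul_sum, mul_comm]
    exact mul_le_mul_of_nonneg_right (hrow k) (sq_nonneg _)
  have h2 : ∑ k ∈ S, ∑ l ∈ S, c l ^ 2 * B k l = ∑ k ∈ S, ∑ l ∈ S, c k ^ 2 * B k l := by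
    rw [Finset.sum_comm]
    simp_rw [hB]
  have h3 : ∑ k ∈ S, ∑ l ∈ S, c k * c l * B k l ≤ ∑ k ∈ S, ∑ l ∈ S, (c k ^ 2 * B k l + c l ^ 2 * B k l) / 2 := by
    refine Finset.sum_le_sum fun k _ => Finset.sum_le_sum fun l _ => ?_
    nlinarith [mul_nonneg (sq_nonneg (c k - c l)) (hB0 k l)]
  have h4 : ∑ k ∈ S, ∑ l ∈ S, (c k ^ 2 * B k l + c l ^ 2 * B k l) / 2
      = (∑ k ∈ S, ∑ l ∈ S, c k ^ 2 * B k l + ∑ k ∈ S, ∑ l ∈ S, c l ^ 2 * B k l) / 2 := by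
    simp_rw [← Finset.sum_div, Finset.sum_add_distrib]
  rw [h4, h2] at h3
  linarith

lemma second_deriv_end (L : ℝ) (hL : 0 < L) (f : ℝ → ℝ) (p q : ℝ → ℝ) 
    (cp : ContinuousOn p (Icc 0 L))
    (hp : ∀ t ∈ Ioo 0 L, HasDerivAt f (p t) t)
    (hq : ∀ t ∈ Icc 0 L, HasDerivWithinAt p (q t) (Icc 0 L) t)
    (t : ℝ) (ht : t ∈ Icc 0 L) (hne : deriv (deriv f) t ≠ 0) : q t ≠ 0 := by
  have hcl : t ∈ closure (Ioo 0 L) := by rwa [closure_Ioo hL.ne]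
  have hd : DifferentiableAt ℝ (deriv f) t := differentiableAt_of_deriv_ne_zero hne
  have heq : EqOn p (deriv f) (Ioo 0 L) := fun x hx => (hp x hx).deriv.symm
  have : (nhdsWithin t (Ioo 0 L)).NeBot := mem_closure_iff_nhdsWithin_neBot.1 hcl
  have hpt : p t = deriv f t := by
    have h1 : Filter.Tendsto p (nhdsWithin t (Ioo 0 L)) (nhds (p t)) := (cp t ht).mono Ioo_subset_Icc_self
    have h2 : Filter.Tendsto (deriv f) (nhdsWithin t (Ioo 0 L)) (nhds (deriv f t)) := hd.continuousAt.continuousWithinAt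
    refine tendsto_nhds_unique (h1.congr' ?_) h2
    filter_upwards [self_mem_nhdsWithin] with x hx using heq hx
  have h3 : HasDerivWithinAt p (deriv (deriv f) t) (Ioo 0 L) t :=
    (hd.hasDerivAt.hasDerivWithinAt (s := Ioo 0 L)).congr heq hpt
  have h4 := (hq t ht).mono Ioo_subset_Icc_self
  have hu : UniqueDiffWithinAt ℝ (Ioo 0 L) t :=
    uniqueDiffWithinAt_convex (convex_Ioo 0 L) (by simp [hL]) hcl
  rw [hu.eq_deriv _ h4 h3]
  exact hne

lemma c2_data (L : ℝ) (hL : 0 < L) (f : ℝ → ℝ) (hf : ContDiffOn ℝ 2 f (Icc 0 L)) :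
    ∃ p q : ℝ → ℝ, ContinuousOn p (Icc 0 L) ∧ ContinuousOn q (Icc 0 L) ∧
      (∀ t ∈ Ioo 0 L, HasDerivAt f (p t) t) ∧ (∀ t ∈ Icc 0 L, HasDerivWithinAt p (q t) (Icc 0 L) t) := by
  have hU := uniqueDiffOn_Icc hL
  have h2 : ContDiffOn ℝ (1 + 1) f (Icc 0 L) := by
    convert hf using 1; norm_num
  have h1 := ((contDiffOn_succ_iff_derivWithin hU).1 h2).2.2
  have h0 : ContDiffOn ℝ 0 (derivWithin (derivWithin f (Icc 0 L)) (Icc 0 L)) (Icc 0 L) :=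
    ((contDiffOn_succ_iff_derivWithin (n := 0) hU).1 (by simpa using h1)).2.2
  refine ⟨_, _, h1.continuousOn, h0.continuousOn, ?_, ?_⟩
  · intro t ht
    have hd := (hf.differentiableOn (by norm_num)) t (Ioo_subset_Icc_self ht)
    exact hd.hasDerivWithinAt.hasDerivAt (Icc_mem_nhds ht.1 ht.2)
  · intro t ht
    exact ((h1.differentiableOn (by norm_num)) t ht).hasDerivWithinAt

lemma closure_eq (L : ℝ) (hL : 0 < L) (f : ℝ → ℝ) (a : ℝ) (hf : ContinuousOn f (Icc 0 L))
    (h : ∀ t ∈ Ioo 0 L, f t = a) : ∀ t ∈ Icc 0 L, f t = a := by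
  have : EqOn f (fun _ => a) (Icc 0 L) := by
    refine Set.EqOn.of_subset_closure (s := Ioo 0 L) (fun t ht => h t ht) hf continuousOn_const Ioo_subset_Icc_self ?_
    rw [closure_Ioo hL.ne]
  exact this

lemma geom (L : ℝ) (hL : 0 < L)
    (γ₁ γ₂ : ℝ → ℝ)
    (hγ₁ : ContDiffOn ℝ 2 γ₁ (Set.Icc 0 L)) (hγ₂ : ContDiffOn ℝ 2 γ₂ (Set.Icc 0 L))
    (hspeed : ∀ t ∈ Set.Icc (0:ℝ) L, (deriv γ₁ t) ^ 2 + (deriv γ₂ t) ^ 2 = 1)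
    (hcurv : ∀ t ∈ Set.Icc (0:ℝ) L,
      ¬(deriv (deriv γ₁) t = 0 ∧ deriv (deriv γ₂) t = 0)) :
    ∃ (p1 p2 κ : ℝ → ℝ) (σ κ0 K : ℝ), ContinuousOn p1 (Icc 0 L) ∧ ContinuousOn p2 (Icc 0 L) ∧ 
    ContinuousOn κ (Icc 0 L) ∧
    (∀ t ∈ Ioo 0 L, HasDerivAt γ₁ (p1 t) t) ∧
    (∀ t ∈ Ioo 0 L, HasDerivAt γ₂ (p2 t) t) ∧
    (∀ t ∈ Ioo 0 L, HasDerivAt p1 (-(κ t * p2 t)) t) ∧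
    (∀ t ∈ Ioo 0 L, HasDerivAt p2 (κ t * p1 t) t) ∧
    (∀ t ∈ Icc 0 L, p1 t ^ 2 + p2 t ^ 2 = 1) ∧
    |σ| = 1 ∧ 0 < κ0 ∧ (∀ t ∈ Icc 0 L, κ0 ≤ σ * κ t) ∧ (∀ t ∈ Icc 0 L, σ * κ t ≤ K) := by
  obtain ⟨p1, q1, cp1, cq1, dp1, dq1⟩ := c2_data L hL γ₁ hγ₁
  obtain ⟨p2, q2, cp2, cq2, dp2, dq2⟩ := c2_data L hL γ₂ hγ₂
  have hsp : ∀ t ∈ Icc 0 L, p1 t ^ 2 + p2 t ^ 2 = 1 := by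
    refine closure_eq L hL (fun t => p1 t ^ 2 + p2 t ^ 2) 1 (by fun_prop) ?_
    intro t ht
    have := hspeed t (Ioo_subset_Icc_self ht)
    rwa [(dp1 t ht).deriv, (dp2 t ht).deriv] at this
  have dp1' : ∀ t ∈ Ioo 0 L, HasDerivAt p1 (q1 t) t := fun t ht =>
    (dq1 t (Ioo_subset_Icc_self ht)).hasDerivAt (Icc_mem_nhds ht.1 ht.2)
  have dp2' : ∀ t ∈ Ioo 0 L, HasDerivAt p2 (q2 t) t := fun t ht =>
    (dq2 t (Ioo_subset_Icc_self ht)).hasDerivAt (Icc_mem_nhds ht.1 ht.2)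
  have horth : ∀ t ∈ Icc 0 L, p1 t * q1 t + p2 t * q2 t = 0 := by
    refine closure_eq L hL (fun t => p1 t * q1 t + p2 t * q2 t) 0 (by fun_prop) ?_
    intro t ht
    have h1 := ((dp1' t ht).pow 2).add ((dp2' t ht).pow 2)
    have h2 : HasDerivAt (p1 ^ 2 + p2 ^ 2) 0 t := by
      refine (hasDerivAt_const t (1:ℝ)).congr_of_eventuallyEq ?_
      filter_upwards [Icc_mem_nhds ht.1 ht.2] with x hx using hsp x hx
    have h3 := h1.unique h2
    norm_num at h3
    linarith
  set κ : ℝ → ℝ := fun t => p1 t * q2 t - p2 t * q1 t with hκ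
  have cκ : ContinuousOn κ (Icc 0 L) := by fun_prop
  have e1 : ∀ t ∈ Icc 0 L, q1 t = -(κ t * p2 t) := by
    intro t ht
    simp only [hκ]
    linear_combination (-(q1 t)) * hsp t ht + p1 t * horth t ht
  have e2 : ∀ t ∈ Icc 0 L, q2 t = κ t * p1 t := by
    intro t ht
    simp only [hκ]
    linear_combination (-(q2 t)) * hsp t ht + p2 t * horth t ht
  have hne : ∀ t ∈ Icc 0 L, κ t ≠ 0 := by
    intro t ht h0
    have f1 := e1 t ht
    have f2 := e2 t ht
    rw [h0] at f1 f2
    apply hcurv t ht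
    constructor
    · by_contra hh
      exact second_deriv_end L hL γ₁ p1 q1 cp1 dp1 dq1 t ht hh (by simpa using f1)
    · by_contra hh
      exact second_deriv_end L hL γ₂ p2 q2 cp2 dp2 dq2 t ht hh (by simpa using f2)
  have hσ : ∃ σ : ℝ, |σ| = 1 ∧ ∀ t ∈ Icc 0 L, 0 < σ * κ t := by
    by_cases hpos : ∀ t ∈ Icc 0 L, 0 < κ t
    · exact ⟨1, by simp, by simpa using hpos⟩
    · push Not at hpos
      obtain ⟨x, hx, hx0⟩ := hpos
      refine ⟨-1, by simp, fun t ht => ?_⟩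
      by_contra hcon
      have ht0 : 0 ≤ κ t := by linarith
      obtain ⟨y, hy, hy0⟩ := isPreconnected_Icc.intermediate_value hx ht cκ ⟨hx0, ht0⟩
      exact hne y hy hy0
  obtain ⟨σ, hσ1, hσ2⟩ := hσ
  have cσ : ContinuousOn (fun t => σ * κ t) (Icc 0 L) := continuousOn_const.mul cκ
  obtain ⟨x, hx, hxm⟩ := isCompact_Icc.exists_isMinOn (nonempty_Icc.2 hL.le) cσ
  obtain ⟨y, hy, hym⟩ := isCompact_Icc.exists_isMaxOn (nonempty_Icc.2 hL.le) cσ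
  refine ⟨p1, p2, κ, σ, σ * κ x, σ * κ y, cp1, cp2, cκ, dp1, dp2, ?_, ?_, hsp, hσ1, hσ2 x hx, fun t ht => hxm ht, fun t ht => hym ht⟩
  · intro t ht
    rw [← e1 t (Ioo_subset_Icc_self ht)]; exact dp1' t ht
  · intro t ht
    rw [← e2 t (Ioo_subset_Icc_self ht)]; exact dp2' t ht

lemma quad (L : ℝ) (hL : 0 < L) (S : Finset ℤ) (c : ℤ → ℂ) (θ : ℤ → ℝ → ℝ)
    (cθ : ∀ k, ContinuousOn (θ k) (Icc 0 L)) (B : ℤ → ℤ → ℝ) (hB : ∀ k l, B k l = B l k)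
    (hB0 : ∀ k l, 0 ≤ B k l) (ε : ℝ) (hrow : ∀ k, ∑ l ∈ S, B k l ≤ ε)
    (hI : ∀ k ∈ S, ∀ l ∈ S, k ≠ l →
      ‖∫ t in (0:ℝ)..L, Complex.exp (((θ k t - θ l t : ℝ) : ℂ) * Complex.I)‖ ≤ B k l) :
    |(∫ t in (0:ℝ)..L, ‖∑ k ∈ S, c k * Complex.exp ((θ k t : ℂ) * Complex.I)‖ ^ 2) - L * ∑ k ∈ S, ‖c k‖ ^ 2|
      ≤ ε * ∑ k ∈ S, ‖c k‖ ^ 2 := by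
  set D : ℤ → ℤ → ℝ → ℂ := fun k l t => Complex.exp (((θ k t - θ l t : ℝ) : ℂ) * Complex.I) with hD
  have iD : ∀ k l, IntervalIntegrable (D k l) volume 0 L := by
    intro k l
    apply ContinuousOn.intervalIntegrable
    rw [uIcc_of_le hL.le]
    exact Complex.continuous_exp.comp_continuousOn
      ((Complex.continuous_ofReal.comp_continuousOn ((cθ k).sub (cθ l))).mul continuousOn_const)
  have hsq : ∀ t, ((‖∑ k ∈ S, c k * Complex.exp ((θ k t : ℂ) * Complex.I)‖ ^ 2 : ℝ) : ℂ)
      = ∑ k ∈ S, ∑ l ∈ S, c k * (starRingEnd ℂ) (c l) * D k l t := by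
    intro t
    push_cast
    rw [← Complex.mul_conj', map_sum, Finset.sum_mul_sum]
    refine Finset.sum_congr rfl fun k _ => Finset.sum_congr rfl fun l _ => ?_
    rw [map_mul, ← Complex.exp_conj, map_mul, Complex.conj_I, Complex.conj_ofReal]
    have : D k l t = Complex.exp ((θ k t : ℂ) * Complex.I) * Complex.exp ((θ l t : ℂ) * -Complex.I) := by
      simp only [hD]
      rw [← Complex.exp_add]; congr 1; push_cast; ring
    rw [this]; ring
  have hint : ((∫ t in (0:ℝ)..L, ‖∑ k ∈ S, c k * Complex.exp ((θ k t : ℂ) * Complex.I)‖ ^ 2 : ℝ) : ℂ)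
      = ∑ k ∈ S, ∑ l ∈ S, c k * (starRingEnd ℂ) (c l) * ∫ t in (0:ℝ)..L, D k l t := by
    rw [← intervalIntegral.integral_ofReal]
    simp_rw [hsq]
    rw [intervalIntegral.integral_finsetSum]
    · refine Finset.sum_congr rfl fun k _ => ?_
      rw [intervalIntegral.integral_finsetSum]
      · refine Finset.sum_congr rfl fun l _ => ?_
        rw [intervalIntegral.integral_const_mul]
      · intro l _
        exact (iD k l).const_mul _
    · intro k _
      have e : (fun t => ∑ l ∈ S, c k * (starRingEnd ℂ) (c l) * D k l t)
          = ∑ l ∈ S, fun t => c k * (starRingEnd ℂ) (c l) * D k l t := by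
        ext t; simp
      rw [e]
      refine IntervalIntegrable.sum S fun l _ => ?_
      exact (iD k l).const_mul _
  have hdiag : ∀ k, ∫ t in (0:ℝ)..L, D k k t = (L : ℂ) := by
    intro k
    simp [hD]
  have hdiff : (((∫ t in (0:ℝ)..L, ‖∑ k ∈ S, c k * Complex.exp ((θ k t : ℂ) * Complex.I)‖ ^ 2) - L * ∑ k ∈ S, ‖c k‖ ^ 2 : ℝ) : ℂ)
      = ∑ k ∈ S, ∑ l ∈ S, if k = l then 0 else c k * (starRingEnd ℂ) (c l) * ∫ t in (0:ℝ)..L, D k l t := by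
    rw [Complex.ofReal_sub, hint]
    have : ((L * ∑ k ∈ S, ‖c k‖ ^ 2 : ℝ) : ℂ) = ∑ k ∈ S, ∑ l ∈ S, if k = l then c k * (starRingEnd ℂ) (c l) * ∫ t in (0:ℝ)..L, D k l t else 0 := by
      push_cast
      rw [Finset.mul_sum]
      refine Finset.sum_congr rfl fun k hk => ?_
      rw [Finset.sum_ite_eq, if_pos hk, hdiag, Complex.mul_conj']
      ring
    rw [this, ← Finset.sum_sub_distrib]
    refine Finset.sum_congr rfl fun k hk => ?_
    rw [← Finset.sum_sub_distrib]
    refine Finset.sum_congr rfl fun l hl => ?_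
    split_ifs <;> simp
  rw [← Real.norm_eq_abs, ← Complex.norm_real, hdiff]
  refine le_trans ?_ (schur S (fun k => ‖c k‖) B hB hB0 ε hrow)
  refine (norm_sum_le _ _).trans (Finset.sum_le_sum fun k hk => (norm_sum_le _ _).trans (Finset.sum_le_sum fun l hl => ?_))
  split_ifs with h
  · rw [norm_zero]
    exact mul_nonneg (mul_nonneg (norm_nonneg _) (norm_nonneg _)) (hB0 k l)
  · rw [norm_mul, norm_mul, RCLike.norm_conj]
    exact mul_le_mul_of_nonneg_left (hI k hk l hl h) (by positivity)

/-- **High-frequency observability along a unit-speed curve with non-vanishing curvature**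
(Theorem `thm:highfreq`). The curve is `γ = (γ₁, γ₂) : [0,L] → ℝ²`, of class `C²`,
unit speed (`γ₁'(t)² + γ₂'(t)² = 1`) and with nowhere-vanishing curvature
(`γ''(t) ≠ 0`), and `σ` is the normalized arc-length measure, so that
`∫_Γ f dσ = (1/L) ∫₀^L f(γ(t)) dt`. -/
theorem highfreq_curve
    (s : ℝ) (hs : 2 < s) (L : ℝ) (hL : 0 < L)
    (γ₁ γ₂ : ℝ → ℝ)
    (hγ₁ : ContDiffOn ℝ 2 γ₁ (Set.Icc 0 L)) (hγ₂ : ContDiffOn ℝ 2 γ₂ (Set.Icc 0 L))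
    (hspeed : ∀ t ∈ Set.Icc (0:ℝ) L, (deriv γ₁ t) ^ 2 + (deriv γ₂ t) ^ 2 = 1)
    (hcurv : ∀ t ∈ Set.Icc (0:ℝ) L,
      ¬(deriv (deriv γ₁) t = 0 ∧ deriv (deriv γ₂) t = 0)) :
    ∃ N₀ : ℕ, ∀ N : ℕ, N₀ ≤ N →
      ∀ c : ℤ → ℂ, {k : ℤ | c k ≠ 0}.Finite →
        (∀ k : ℤ, |k| < (N : ℤ) → c k = 0) →
        (1 / 2) * (∑' k : ℤ, ‖c k‖ ^ 2) ≤
          (1 / L) * (∫ t in (0:ℝ)..L,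
            ‖∑' k : ℤ, c k * Complex.exp (2 * Real.pi * Complex.I *
              (((|(k : ℝ)| ^ s : ℝ) : ℂ) * (γ₁ t : ℂ) + (k : ℂ) * (γ₂ t : ℂ)))‖ ^ 2) ∧
        (1 / L) * (∫ t in (0:ℝ)..L,
            ‖∑' k : ℤ, c k * Complex.exp (2 * Real.pi * Complex.I *
              (((|(k : ℝ)| ^ s : ℝ) : ℂ) * (γ₁ t : ℂ) + (k : ℂ) * (γ₂ t : ℂ)))‖ ^ 2) ≤
          (3 / 2) * (∑' k : ℤ, ‖c k‖ ^ 2) := by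
  obtain ⟨p1, p2, κ, σ, κ0, K, c1, c2, ck, dg1, dg2, d1, d2, hsp, hσ, hκ0, hlow, hup⟩ :=
    geom L hL γ₁ γ₂ hγ₁ hγ₂ hspeed hcurv
  set C : ℝ := 1 + (1 + K) * ((4 + 3 * K * L) / κ0) with hC
  have hK : 0 < K := by
    have h1 := hlow 0 ⟨le_rfl, hL.le⟩
    have h2 := hup 0 ⟨le_rfl, hL.le⟩
    linarith
  have hCpos : 0 < C := by positivity
  obtain ⟨N₀, hN1, hN₀⟩ := ex_N s hs (L / (2 * C)) (2 * ∑' j : ℤ, |(j:ℝ)| ^ (-(1 + (s-2)/4))) (by positivity)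
  refine ⟨N₀, fun N hN c hfin hc => ?_⟩
  have hNε := hN₀ N hN
  have hNR : (1:ℝ) ≤ N := by exact_mod_cast hN1.trans hN
  set S : Finset ℤ := hfin.toFinset with hS
  have hmem : ∀ k, k ∉ S → c k = 0 := by
    intro k hk
    by_contra h
    exact hk (by simpa [hS] using h)
  have hbig : ∀ k ∈ S, (N:ℝ) ≤ |(k:ℝ)| := by
    intro k hk
    have h1 : c k ≠ 0 := by simpa [hS] using hk
    have h2 : (N:ℤ) ≤ |k| := by
      by_contra h
      exact h1 (hc k (by omega))
    exact_mod_cast h2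
  set θ : ℤ → ℝ → ℝ := fun k t => 2 * Real.pi * (|(k:ℝ)| ^ s * γ₁ t + k * γ₂ t) with hθ
  have cθ : ∀ k, ContinuousOn (θ k) (Icc 0 L) := by
    intro k
    have := hγ₁.continuousOn
    have := hγ₂.continuousOn
    exact continuousOn_const.mul ((continuousOn_const.mul hγ₁.continuousOn).add
      (continuousOn_const.mul hγ₂.continuousOn))
  set B : ℤ → ℤ → ℝ := fun k l => C * ((N:ℝ) ^ (-((s-2)/4)) *
    (|((k - l : ℤ) : ℝ)| ^ (-(1 + (s-2)/4)) + |((k + l : ℤ):ℝ)| ^ (-(1 + (s-2)/4)))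
      + (if l = -k then (N:ℝ) ^ (-(1/2) : ℝ) else 0)) with hBdef
  have hB : ∀ k l, B k l = B l k := by
    intro k l
    have h1 : |((k - l : ℤ) : ℝ)| = |((l - k : ℤ) : ℝ)| := by
      push_cast; exact abs_sub_comm _ _
    have h2 : k + l = l + k := add_comm _ _
    have h3 : (l = -k) ↔ (k = -l) := by omega
    simp only [hBdef, h1, h2, h3]
  have hB0 : ∀ k l, 0 ≤ B k l := by
    intro k l
    simp only [hBdef]
    split_ifs <;> positivity
  have hrow : ∀ k, ∑ l ∈ S, B k l ≤ L / 2 := by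
    intro k
    simp only [hBdef]
    rw [← Finset.mul_sum]
    calc _ ≤ C * (L / (2 * C)) :=
          mul_le_mul_of_nonneg_left ((rowsum s hs N hNR S k).trans hNε) hCpos.le
      _ = L / 2 := by field_simp
  have hI : ∀ k ∈ S, ∀ l ∈ S, k ≠ l →
      ‖∫ t in (0:ℝ)..L, Complex.exp (((θ k t - θ l t : ℝ) : ℂ) * Complex.I)‖ ≤ B k l := by
    intro k hk l hl hkl
    set a : ℝ := 2 * Real.pi * (|(k:ℝ)| ^ s - |(l:ℝ)| ^ s) with ha
    set b : ℝ := 2 * Real.pi * ((k:ℝ) - l) with hb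
    set R : ℝ := Real.sqrt (a ^ 2 + b ^ 2) with hR
    have hpi : 1 ≤ 2 * Real.pi := by linarith [Real.pi_gt_three]
    have hRa : |(|(k:ℝ)| ^ s - |(l:ℝ)| ^ s)| ≤ R := by
      have h1 : |a| ≤ R := Real.abs_le_sqrt (by nlinarith [sq_nonneg b])
      refine le_trans ?_ h1
      rw [ha, abs_mul, abs_of_pos (by linarith : 0 < 2 * Real.pi)]
      exact le_mul_of_one_le_left (abs_nonneg _) hpi
    have hRb : |(k:ℝ) - l| ≤ R := by
      have h1 : |b| ≤ R := Real.abs_le_sqrt (by nlinarith [sq_nonneg a])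
      refine le_trans ?_ h1
      rw [hb, abs_mul, abs_of_pos (by linarith : 0 < 2 * Real.pi)]
      exact le_mul_of_one_le_left (abs_nonneg _) hpi
    have hR1 : 1 ≤ R := by
      refine le_trans ?_ hRb
      have : (1:ℤ) ≤ |k - l| := Int.one_le_abs (sub_ne_zero.2 hkl)
      exact_mod_cast this
    have hab : a ^ 2 + b ^ 2 = (Real.sqrt R) ^ 4 := by
      have h1 : (Real.sqrt R) ^ 2 = R := Real.sq_sqrt (by linarith)
      have h2 : R ^ 2 = a ^ 2 + b ^ 2 := Real.sq_sqrt (by positivity)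
      rw [← h2]; nth_rewrite 1 [← h1]; ring
    have hv := vdc L hL γ₁ γ₂ p1 p2 κ hγ₁.continuousOn hγ₂.continuousOn c1 c2 ck dg1 dg2 d1 d2 hsp
      σ κ0 K hσ hκ0 hlow hup a b (Real.sqrt R) (Real.one_le_sqrt.2 hR1) hab
    have heq : ∀ t, θ k t - θ l t = a * γ₁ t + b * γ₂ t := by
      intro t
      simp only [hθ, ha, hb]; ring
    simp_rw [heq]
    refine hv.trans ?_
    rw [← hC, div_eq_mul_inv]
    have hinv : (Real.sqrt R)⁻¹ = R ^ (-(1/2) : ℝ) := by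
      rw [Real.sqrt_eq_rpow, Real.rpow_neg (by linarith)]
    rw [hinv]
    exact mul_le_mul_of_nonneg_left (rlow s hs N hNR k l (hbig k hk) (hbig l hl) hkl R hRa hRb) hCpos.le
  have hq := quad L hL S c θ cθ B hB hB0 (L / 2) hrow hI
  have hsum1 : ∑' k : ℤ, ‖c k‖ ^ 2 = ∑ k ∈ S, ‖c k‖ ^ 2 :=
    tsum_eq_sum fun k hk => by simp [hmem k hk]
  have hsum2 : ∀ t, ∑' k : ℤ, c k * Complex.exp (2 * Real.pi * Complex.I *
              (((|(k : ℝ)| ^ s : ℝ) : ℂ) * (γ₁ t : ℂ) + (k : ℂ) * (γ₂ t : ℂ)))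
      = ∑ k ∈ S, c k * Complex.exp ((θ k t : ℂ) * Complex.I) := by
    intro t
    rw [tsum_eq_sum (s := S) fun k hk => by simp [hmem k hk]]
    refine Finset.sum_congr rfl fun k _ => ?_
    congr 2
    simp only [hθ]
    push_cast
    ring
  simp_rw [hsum1, hsum2]
  set A := ∫ t in (0:ℝ)..L, ‖∑ k ∈ S, c k * Complex.exp ((θ k t : ℂ) * Complex.I)‖ ^ 2
  set X := ∑ k ∈ S, ‖c k‖ ^ 2
  rw [abs_le] at hq
  have hA : (1 / L) * A * L = A := by field_simp
  constructor
  · refine le_of_mul_le_mul_right ?_ hL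
    rw [hA]; linarith [hq.1]
  · refine le_of_mul_le_mul_right ?_ hL
    rw [hA]; linarith [hq.2]
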